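/- arXiv:2407.17619 — 6 statements merged into one kernel-verified Lean document; each statement's English description precedes it below -/
import Mathlib

section
/- Let G be a finite simple graph and let ψ > 0 be a real number. Suppose Y assigns a nonnegative real weight Y_e to each edge e of G such that for every vertex v the sum of Y_e over all edges e incident to v is at most 1 (i.e., Y is a fractional matching), and Y_e ≤ ψ for every edge e. Then the total weight ∑_{e ∈ E(G)} Y_e is at most (1 + ψ) · μ(G), where μ(G) denotes the matching number of G. -/
attribute [local instance] Classical.propDecidable

/-- `M` is a matching of `G`, viewed as a finite set of pairwise vertex-disjoint edges. -/
def SimpleGraph.IsMatchingFinset {V : Type*} (G : SimpleGraph V) (M : Finset (Sym2 V)) : Prop :=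
  (↑M : Set (Sym2 V)) ⊆ G.edgeSet ∧
    (M : Set (Sym2 V)).Pairwise fun e f => ∀ v, v ∈ e → v ∉ f

/-- The matching number of `G`: the largest cardinality of a matching. -/
noncomputable def SimpleGraph.matchingNumber {V : Type*} [Fintype V] (G : SimpleGraph V) : ℕ :=
  sSup {n | ∃ M : Finset (Sym2 V), G.IsMatchingFinset M ∧ M.card = n}

section Helpers

def FMIsM {V : Type*} (M : Finset (Sym2 V)) : Prop :=
  ∀ e ∈ M, ∀ f ∈ M, ∀ v, v ∈ e → v ∈ f → e = f

def FMCov {V : Type*} (M : Finset (Sym2 V)) (v : V) : Prop := ∃ e ∈ M, v ∈ e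

def FMMax {V : Type*} (E M : Finset (Sym2 V)) : Prop :=
  M ⊆ E ∧ FMIsM M ∧ ∀ N, N ⊆ E → FMIsM N → N.card ≤ M.card

theorem fm_card_cov {V : Type*} [Fintype V] (M : Finset (Sym2 V))
    (hd : ∀ e ∈ M, ¬ e.IsDiag) (hM : FMIsM M) :
    (Finset.univ.filter (FMCov M)).card = 2 * M.card := by
  have h : Finset.univ.filter (FMCov M) = M.biUnion (fun e => e.toFinset) := by
    ext v; simp [FMCov]
  rw [h, Finset.card_biUnion, Finset.sum_congr rfl
    (fun e he => Sym2.card_toFinset_of_not_isDiag e (hd e he))]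
  · simp [mul_comm]
  · intro e he f hf hne
    refine Finset.disjoint_left.2 ?_
    intro v hv hv'
    exact hne (hM e he f hf v (by simpa using hv) (by simpa using hv'))

theorem fm_insert {V : Type*} (N : Finset (Sym2 V)) (e : Sym2 V) (hN : FMIsM N)
    (h : ∀ v ∈ e, ¬ FMCov N v) : FMIsM (insert e N) := by
  intro a ha b hb v hva hvb
  rw [Finset.mem_insert] at ha hb
  rcases ha with rfl | ha <;> rcases hb with rfl | hb
  · rfl
  · exact absurd ⟨b, hb, hvb⟩ (h v hva)
  · exact absurd ⟨a, ha, hva⟩ (h v hvb)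
  · exact hN a ha b hb v hva hvb

theorem fm_gallai {V : Type*} [Fintype V] (E : Finset (Sym2 V))
    (hd : ∀ e ∈ E, ¬ e.IsDiag) (hmiss : ∀ v, ∃ M, FMMax E M ∧ ¬ FMCov M v)
    (u t v : V) (huv : u ≠ v)
    (hut : ∀ M, FMMax E M → FMCov M u ∨ FMCov M t)
    (htv : ∀ M, FMMax E M → FMCov M t ∨ FMCov M v) :
    ∀ M, FMMax E M → FMCov M u ∨ FMCov M v := by
  intro M hM
  by_contra hcon
  push Not at hcon
  obtain ⟨hu, hv⟩ := hcon
  have htM : FMCov M t := (hut M hM).resolve_left hu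
  obtain ⟨N, hNmem, hNmax⟩ := Finset.exists_max_image
    (E.powerset.filter (fun N => FMMax E N ∧ ¬ FMCov N t)) (fun N => (M ∩ N).card) (by
      obtain ⟨N, hN, hNt⟩ := hmiss t
      exact ⟨N, by simp [hN, hNt, hN.1]⟩)
  simp only [Finset.mem_filter, Finset.mem_powerset] at hNmem hNmax
  obtain ⟨hNE, hN, hNt⟩ := hNmem
  have hNu : FMCov N u := (hut N hN).resolve_right hNt
  have hNv : FMCov N v := (htv N hN).resolve_left hNt
  have hcard : M.card = N.card := le_antisymm (hN.2.2 M hM.1 hM.2.1) (hM.2.2 N hN.1 hN.2.1)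
  have hcM := fm_card_cov M (fun e he => hd e (hM.1 he)) hM.2.1
  have hcN := fm_card_cov N (fun e he => hd e (hN.1 he)) hN.2.1
  set A := Finset.univ.filter (FMCov M) with hA
  set B := Finset.univ.filter (FMCov N) with hB
  have h1 : (B \ A).card = (A \ B).card := by
    have := Finset.card_sdiff_add_card_inter A B
    have := Finset.card_sdiff_add_card_inter B A
    rw [Finset.inter_comm] at this
    omega
  have h2 : 2 ≤ (B \ A).card := by
    rw [← Finset.card_pair huv]
    apply Finset.card_le_card
    intro w hw
    simp only [Finset.mem_insert, Finset.mem_singleton] at hw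
    rcases hw with rfl | rfl <;> simp [hA, hB, *]
  obtain ⟨x, hx, hxt⟩ := Finset.exists_mem_ne (show 1 < (A \ B).card by omega) t
  simp only [hA, hB, Finset.mem_sdiff, Finset.mem_filter, Finset.mem_univ, true_and] at hx
  obtain ⟨⟨e, heM, hxe⟩, hxN⟩ := hx
  obtain ⟨y, rfl⟩ := hxe
  have heN : s(x, y) ∉ N := fun h => hxN ⟨_, h, by simp⟩
  have hyN : FMCov N y := by
    by_contra hy
    have := hN.2.2 (insert s(x, y) N) (Finset.insert_subset (hM.1 heM) hN.1)
      (fm_insert N _ hN.2.1 (by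
        intro w hw
        rcases Sym2.mem_iff.1 hw with rfl | rfl <;> assumption))
    rw [Finset.card_insert_of_notMem heN] at this
    omega
  obtain ⟨f, hfN, hyf⟩ := hyN
  have hfM : f ∉ M := by
    intro h
    have := hM.2.1 _ heM f h y (by simp) hyf
    exact heN (this ▸ hfN)
  have hsub : N.erase f ⊆ N := Finset.erase_subset _ _
  have heN' : s(x, y) ∉ N.erase f := fun h => heN (hsub h)
  have hN'E : insert s(x, y) (N.erase f) ⊆ E :=
    Finset.insert_subset (hM.1 heM) (hsub.trans hN.1)
  have hc' : (insert s(x, y) (N.erase f)).card = N.card := by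
    rw [Finset.card_insert_of_notMem heN', Finset.card_erase_of_mem hfN]
    have := Finset.card_pos.2 ⟨f, hfN⟩
    omega
  have hN'M : FMMax E (insert s(x, y) (N.erase f)) := by
    refine ⟨hN'E, fm_insert _ _ ?_ ?_, ?_⟩
    · intro a ha b hb
      exact hN.2.1 a (hsub ha) b (hsub hb)
    · rintro w hw ⟨g, hg, hwg⟩
      rcases Sym2.mem_iff.1 hw with rfl | rfl
      · exact hxN ⟨g, hsub hg, hwg⟩
      · exact (Finset.mem_erase.1 hg).1 (hN.2.1 g (hsub hg) f hfN _ hwg hyf)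
    · rw [hc']; exact hN.2.2
  have hN't : ¬ FMCov (insert s(x, y) (N.erase f)) t := by
    rintro ⟨g, hg, htg⟩
    rcases Finset.mem_insert.1 hg with rfl | hg
    · rcases Sym2.mem_iff.1 htg with rfl | rfl
      · exact hxt rfl
      · exact hNt ⟨f, hfN, hyf⟩
    · exact hNt ⟨g, hsub hg, htg⟩
  have h3 := hNmax _ ⟨hN'E, hN'M, hN't⟩
  have h4 : insert s(x, y) (M ∩ N) ⊆ M ∩ insert s(x, y) (N.erase f) := by
    intro g hg
    simp only [Finset.mem_insert, Finset.mem_inter, Finset.mem_erase] at hg ⊢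
    rcases hg with rfl | ⟨h, h'⟩
    · exact ⟨heM, Or.inl rfl⟩
    · exact ⟨h, Or.inr ⟨fun hh => hfM (hh ▸ h), h'⟩⟩
  have h5 := Finset.card_le_card h4
  rw [Finset.card_insert_of_notMem (by simp [heN])] at h5
  omega

theorem fm_caseB {V : Type*} [Fintype V] (E : Finset (Sym2 V))
    (hd : ∀ e ∈ E, ¬ e.IsDiag) (hmiss : ∀ v, ∃ M, FMMax E M ∧ ¬ FMCov M v)
    (ψ : ℝ) (hψ : 0 < ψ) (Y : Sym2 V → ℝ)
    (hub : ∀ e ∈ E, Y e ≤ ψ)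
    (hfrac : ∀ v : V, ∑ e ∈ E.filter (fun e => v ∈ e), Y e ≤ 1)
    (M : Finset (Sym2 V)) (hM : FMMax E M) :
    ∑ e ∈ E, Y e ≤ (1 + ψ) * M.card := by
  let R : V → V → Prop := fun u v => u = v ∨ ∀ M, FMMax E M → FMCov M u ∨ FMCov M v
  have Rrefl : ∀ u, R u u := fun u => Or.inl rfl
  have Rsymm : ∀ {u v}, R u v → R v u := by
    rintro u v (h | h)
    · exact Or.inl h.symm
    · exact Or.inr fun M hM => (h M hM).symm
  have Rtrans : ∀ {u t v}, R u t → R t v → R u v := by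
    intro u t v h1 h2
    by_cases huv : u = v
    · exact Or.inl huv
    rcases h1 with rfl | h1
    · exact h2
    rcases h2 with rfl | h2
    · exact Or.inr h1
    exact Or.inr (fm_gallai E hd hmiss u t v huv h1 h2)
  have Radj : ∀ u v, s(u, v) ∈ E → R u v := by
    intro u v he
    right
    intro N hN
    by_contra hcon
    push Not at hcon
    have h1 := hN.2.2 (insert s(u, v) N) (Finset.insert_subset he hN.1)
      (fm_insert N _ hN.2.1 (by
        intro w hw
        rcases Sym2.mem_iff.1 hw with rfl | rfl
        exacts [hcon.1, hcon.2]))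
    rw [Finset.card_insert_of_notMem (fun h => hcon.1 ⟨_, h, by simp⟩)] at h1
    omega
  let C : V → Finset V := fun v => Finset.univ.filter (R v)
  have hCmem : ∀ v w, w ∈ C v ↔ R v w := by intro v w; simp [C]
  have hCpos : ∀ v, (1 : ℝ) ≤ (C v).card := by
    intro v
    exact_mod_cast Finset.card_pos.2 ⟨v, (hCmem v v).2 (Rrefl v)⟩
  have hCeq : ∀ u v, R u v → C u = C v := by
    intro u v h
    ext w
    rw [hCmem, hCmem]
    exact ⟨fun h' => Rtrans (Rsymm h) h', fun h' => Rtrans h h'⟩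
  -- pointwise bound
  have hpt : ∀ v, ∑ e ∈ E.filter (fun e => v ∈ e), Y e ≤ (1 + ψ) * (1 - 1 / (C v).card) := by
    intro v
    have hdeg : (E.filter (fun e => v ∈ e)).card ≤ (C v).card - 1 := by
      rw [← Finset.card_erase_of_mem ((hCmem v v).2 (Rrefl v))]
      refine le_trans (Finset.card_le_card ?_)
        (Finset.card_image_le (s := (C v).erase v) (f := fun w => s(v, w)))
      intro e he
      obtain ⟨heE, hve⟩ := Finset.mem_filter.1 he
      obtain ⟨w, rfl⟩ := hve
      refine Finset.mem_image.2 ⟨w, Finset.mem_erase.2 ⟨?_, (hCmem v w).2 (Radj v w heE)⟩, rfl⟩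
      rintro rfl
      exact hd _ heE (by simp)
    have hdeg' : ((E.filter (fun e => v ∈ e)).card : ℝ) ≤ (C v).card - 1 := by
      have h1 : 1 ≤ (C v).card := by exact_mod_cast hCpos v
      have : (E.filter (fun e => v ∈ e)).card + 1 ≤ (C v).card := by omega
      have : (((E.filter (fun e => v ∈ e)).card + 1 : ℕ) : ℝ) ≤ (C v).card := by exact_mod_cast this
      push_cast at this
      linarith
    have h1 : ∑ e ∈ E.filter (fun e => v ∈ e), Y e ≤ ((C v).card - 1) * ψ := by
      calc _ ≤ ∑ e ∈ E.filter (fun e => v ∈ e), ψ :=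
            Finset.sum_le_sum fun e he => hub e (Finset.mem_filter.1 he).1
        _ = (E.filter (fun e => v ∈ e)).card * ψ := by simp
        _ ≤ _ := by gcongr
    have h2 := hfrac v
    have hc := hCpos v
    generalize ((C v).card : ℝ) = c at *
    generalize ∑ e ∈ E.filter (fun e => v ∈ e), Y e = d at *
    have : (1 + ψ) * (1 - 1 / c) = (1 + ψ) * (c - 1) / c := by
      field_simp
    rw [this, le_div_iff₀ (by linarith)]
    nlinarith
  -- double counting
  have hdc : ∑ v : V, ∑ e ∈ E.filter (fun e => v ∈ e), Y e = 2 * ∑ e ∈ E, Y e := by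
    simp_rw [Finset.sum_filter]
    rw [Finset.sum_comm, Finset.mul_sum]
    refine Finset.sum_congr rfl fun e he => ?_
    rw [← Finset.sum_filter, Finset.sum_const]
    have : Finset.univ.filter (fun v => v ∈ e) = e.toFinset := by ext; simp
    rw [this, Sym2.card_toFinset_of_not_isDiag e (hd e he)]
    simp
  -- missed vertices
  set U := Finset.univ.filter (fun v => ¬ FMCov M v) with hU
  have hUcard : (U.card : ℝ) = Fintype.card V - 2 * M.card := by
    have h1 := fm_card_cov M (fun e he => hd e (hM.1 he)) hM.2.1
    have h2 := Finset.card_filter_add_card_filter_not (s := (Finset.univ : Finset V)) (FMCov M)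
    rw [h1, Finset.card_univ] at h2
    rw [← h2]; push_cast; ring
  have hUle : (U.card : ℝ) ≤ ∑ v : V, 1 / ((C v).card : ℝ) := by
    calc (U.card : ℝ) = ∑ u ∈ U, ∑ v ∈ C u, 1 / ((C v).card : ℝ) := by
          rw [Finset.card_eq_sum_ones]
          push_cast
          refine Finset.sum_congr rfl fun u _ => ?_
          rw [Finset.sum_congr rfl (fun v hv => by rw [← hCeq u v ((hCmem u v).1 hv)])]
          rw [Finset.sum_const, nsmul_eq_mul]
          have := hCpos u
          field_simp
      _ = ∑ v : V, ∑ u ∈ U.filter (fun u => R u v), 1 / ((C v).card : ℝ) := by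
          simp_rw [C, Finset.sum_filter]
          rw [Finset.sum_comm]
      _ ≤ _ := by
          refine Finset.sum_le_sum fun v _ => ?_
          rw [Finset.sum_const, nsmul_eq_mul]
          have h1 : (U.filter (fun u => R u v)).card ≤ 1 := by
            rw [Finset.card_le_one]
            intro a ha b hb
            simp only [hU, Finset.mem_filter, Finset.mem_univ, true_and] at ha hb
            rcases Rtrans ha.2 (Rsymm hb.2) with h | h
            · exact h
            · exact absurd (h M hM) (by simp [ha.1, hb.1])
          have h1' : ((U.filter (fun u => R u v)).card : ℝ) ≤ 1 := by exact_mod_cast h1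
          have : (0 : ℝ) ≤ 1 / ((C v).card : ℝ) := by positivity
          exact mul_le_of_le_one_left this h1'
  have hsum := Finset.sum_le_sum (fun v (_ : v ∈ (Finset.univ : Finset V)) => hpt v)
  rw [hdc, ← Finset.mul_sum, Finset.sum_sub_distrib] at hsum
  simp only [Finset.sum_const, Finset.card_univ, nsmul_eq_mul, mul_one] at hsum
  have : (1 + ψ) * ((Fintype.card V : ℝ) - ∑ v : V, 1 / ((C v).card : ℝ))
      ≤ (1 + ψ) * (2 * M.card) := by
    apply mul_le_mul_of_nonneg_left _ (by linarith)
    linarith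
  linarith

theorem fm_main {V : Type*} [Fintype V] (ψ : ℝ) (hψ : 0 < ψ) (Y : Sym2 V → ℝ)
    (E : Finset (Sym2 V)) : 
    (∀ e ∈ E, ¬ e.IsDiag) → (∀ e ∈ E, Y e ≤ ψ) → (∀ e ∈ E, 0 ≤ Y e) →
    (∀ v : V, ∑ e ∈ E.filter (fun e => v ∈ e), Y e ≤ 1) →
    ∃ M, M ⊆ E ∧ FMIsM M ∧ ∑ e ∈ E, Y e ≤ (1 + ψ) * M.card := by
  induction E using Finset.strongInduction with
  | H E ih =>
  intro hd hub hnn hfrac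
  obtain ⟨M, hMmem, hMmax⟩ := Finset.exists_max_image
    (E.powerset.filter FMIsM) Finset.card ⟨∅, by simp [FMIsM]⟩
  simp only [Finset.mem_filter, Finset.mem_powerset] at hMmem hMmax
  have hM : FMMax E M := ⟨hMmem.1, hMmem.2, fun N h1 h2 => hMmax N ⟨h1, h2⟩⟩
  by_cases hmiss : ∀ v, ∃ M, FMMax E M ∧ ¬ FMCov M v
  · exact ⟨M, hM.1, hM.2.1, fm_caseB E hd hmiss ψ hψ Y hub hfrac M hM⟩
  push Not at hmiss
  obtain ⟨v, hv⟩ := hmiss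
  have hsub : E.filter (fun e => v ∉ e) ⊆ E := Finset.filter_subset _ _
  obtain ⟨e, he, hve⟩ := hv M hM
  have hss : E.filter (fun e => v ∉ e) ⊂ E :=
    Finset.filter_ssubset.2 ⟨e, hM.1 he, by simpa using hve⟩
  obtain ⟨N, hNE, hN, hYN⟩ := ih _ hss (fun e he => hd e (hsub he))
    (fun e he => hub e (hsub he)) (fun e he => hnn e (hsub he)) (by
      intro w
      refine le_trans (Finset.sum_le_sum_of_subset_of_nonneg
        (Finset.filter_subset_filter _ hsub) ?_) (hfrac w)
      intro e he _
      exact hnn e (Finset.mem_filter.1 he).1)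
  refine ⟨M, hM.1, hM.2.1, ?_⟩
  have hlt : N.card + 1 ≤ M.card := by
    by_contra hcon
    obtain ⟨f, hf, hvf⟩ := hv N ⟨hNE.trans hsub, hN, fun N' h1 h2 =>
      (hM.2.2 N' h1 h2).trans (by omega)⟩
    exact (Finset.mem_filter.1 (hNE hf)).2 hvf
  have hlt' : (N.card : ℝ) + 1 ≤ M.card := by exact_mod_cast hlt
  have hs := Finset.sum_filter_add_sum_filter_not E (fun e => v ∈ e) Y
  have := hfrac v
  nlinarith

end Helpers

/-- Any fractional matching with maximum edge weight at most `ψ` has total weight at most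
`(1 + ψ) · μ(G)`. -/
theorem fractional_matching_le {V : Type*} [Fintype V] [DecidableEq V]
    (G : SimpleGraph V) [DecidableRel G.Adj] (ψ : ℝ) (hψ : 0 < ψ)
    (Y : Sym2 V → ℝ)
    (hnn : ∀ e ∈ G.edgeFinset, 0 ≤ Y e)
    (hub : ∀ e ∈ G.edgeFinset, Y e ≤ ψ)
    (hfrac : ∀ v : V, ∑ e ∈ G.incidenceFinset v, Y e ≤ 1) :
    ∑ e ∈ G.edgeFinset, Y e ≤ (1 + ψ) * G.matchingNumber := by
  have hinc : ∀ v : V, G.edgeFinset.filter (fun e => v ∈ e) = G.incidenceFinset v := by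
    intro v
    ext e
    simp [SimpleGraph.incidenceSet]
  obtain ⟨M, hME, hM, hY⟩ := fm_main ψ hψ Y G.edgeFinset
    (fun e he => G.not_isDiag_of_mem_edgeSet (SimpleGraph.mem_edgeFinset.1 he)) hub hnn (by
      intro v
      refine le_trans (le_of_eq ?_) (hfrac v)
      rw [← hinc v]
      congr!)
  have hle : M.card ≤ G.matchingNumber := by
    refine le_csSup ⟨Fintype.card (Sym2 V), ?_⟩ ⟨M, ⟨?_, ?_⟩, rfl⟩
    · rintro n ⟨N, -, rfl⟩
      exact Finset.card_le_univ N
    · intro e he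
      exact SimpleGraph.mem_edgeFinset.1 (hME he)
    · intro e he f hf hne v hve hvf
      exact hne (hM e he f hf v hve hvf)
  have hle' : (M.card : ℝ) ≤ G.matchingNumber := by exact_mod_cast hle
  exact hY.trans (mul_le_mul_of_nonneg_left hle' (by linarith))
end

section
/- Let V be a finite vertex set, let α̃ and T be natural numbers, and let s be a stream of length T each of whose entries s_j is either ⊥ or an edge (an unordered pair of distinct vertices of V), such that the non-⊥ entries of s are pairwise distinct edges. Fix a set Samp ⊆ {1, …, T} of sampled indices. For each t ∈ {1, …, T}, define the kept set K_t(s) as the set of indices j ∈ Samp with j ≤ t such that s_j is an edge and, for each endpoint w of s_j, the number of indices i with j < i ≤ t for which s_i is an edge incident to w is at most α̃. Let t* ∈ {1, …, T} be an index with s_{t*} an edge, and let s' be the stream obtained from s by setting s'_{t*} = ⊥ and s'_i = s_i for all i ≠ t*. Then for every t ∈ {1, …, T}, the cardinalities of the kept sets satisfy | |K_t(s)| − |K_t(s')| | ≤ 2. -/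
attribute [local instance] Classical.propDecidable

/-- The kept set at time `t`: sampled indices `j ≤ t` carrying an edge such that, for each
endpoint `w` of that edge, at most `α̃` later stream entries (up to time `t`) are edges
incident to `w`. -/
noncomputable def keptSet {V : Type*} [Fintype V] {T : ℕ} (αtilde : ℕ)
    (s : Fin T → Option (Sym2 V)) (Samp : Finset (Fin T)) (t : Fin T) : Finset (Fin T) :=
  Samp.filter fun j => j ≤ t ∧ ∃ e, s j = some e ∧ ∀ w ∈ e,
    (Finset.univ.filter fun i : Fin T =>
      j < i ∧ i ≤ t ∧ ∃ f, s i = some f ∧ w ∈ f).card ≤ αtilde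

noncomputable def laterSet {V : Type*} {T : ℕ}
    (s : Fin T → Option (Sym2 V)) (t j : Fin T) (w : V) : Finset (Fin T) :=
  Finset.univ.filter fun i : Fin T => j < i ∧ i ≤ t ∧ ∃ f, s i = some f ∧ w ∈ f

theorem mem_laterSet {V : Type*} {T : ℕ}
    (s : Fin T → Option (Sym2 V)) (t j : Fin T) (w : V) (i : Fin T) :
    i ∈ laterSet s t j w ↔ j < i ∧ i ≤ t ∧ ∃ f, s i = some f ∧ w ∈ f := by
  simp [laterSet]

theorem mem_keptSet {V : Type*} [Fintype V] {T : ℕ} (a : ℕ)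
    (s : Fin T → Option (Sym2 V)) (Samp : Finset (Fin T)) (t j : Fin T) :
    j ∈ keptSet a s Samp t ↔ j ∈ Samp ∧ j ≤ t ∧ ∃ e, s j = some e ∧ ∀ w ∈ e,
      (laterSet s t j w).card ≤ a := by
  unfold keptSet laterSet
  rw [Finset.mem_filter]

theorem laterSet_lt {V : Type*} {T : ℕ}
    (s : Fin T → Option (Sym2 V)) (t i j : Fin T) (w : V) (hij : i < j) (hj : j ≤ t)
    (e : Sym2 V) (he : s j = some e) (hw : w ∈ e) :
    (laterSet s t j w).card < (laterSet s t i w).card := by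
  apply Finset.card_lt_card
  rw [Finset.ssubset_iff_of_subset]
  · refine ⟨j, ?_, ?_⟩
    · rw [mem_laterSet]; exact ⟨hij, hj, e, he, hw⟩
    · rw [mem_laterSet]; exact fun h => lt_irrefl _ h.1
  · intro k hk
    rw [mem_laterSet] at hk ⊢
    exact ⟨hij.trans hk.1, hk.2⟩

noncomputable def critSet {V : Type*} {T : ℕ} (a : ℕ)
    (s : Fin T → Option (Sym2 V)) (t : Fin T) (w : V) : Finset (Fin T) :=
  Finset.univ.filter fun j : Fin T => j ≤ t ∧ (∃ e, s j = some e ∧ w ∈ e) ∧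
    (laterSet s t j w).card = a + 1

theorem critSet_card {V : Type*} {T : ℕ} (a : ℕ)
    (s : Fin T → Option (Sym2 V)) (t : Fin T) (w : V) : (critSet a s t w).card ≤ 1 := by
  rw [Finset.card_le_one]
  intro i hi j hj
  simp only [critSet, Finset.mem_filter, Finset.mem_univ, true_and] at hi hj
  obtain ⟨hit, ⟨e, he, hwe⟩, hic⟩ := hi
  obtain ⟨hjt, ⟨f, hf, hwf⟩, hjc⟩ := hj
  rcases lt_trichotomy i j with h | h | h
  · have := laterSet_lt s t i j w h hjt f hf hwf
    omega
  · exact h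
  · have := laterSet_lt s t j i w h hit e he hwe
    omega

/-- Replacing a single edge update of an insertion-only stream (with pairwise-distinct edges)
by an empty update changes the size of the kept set by at most `2`, at every time step. -/
theorem keptSet_sensitivity {V : Type*} [Fintype V] [DecidableEq V] {T : ℕ} (αtilde : ℕ)
    (s : Fin T → Option (Sym2 V))
    (hdiag : ∀ j e, s j = some e → ¬ e.IsDiag)
    (hdist : ∀ i j e e', s i = some e → s j = some e' → i ≠ j → e ≠ e')
    (Samp : Finset (Fin T))
    (tstar : Fin T) (estar : Sym2 V) (hstar : s tstar = some estar)
    (s' : Fin T → Option (Sym2 V)) (hs' : s' = Function.update s tstar none) :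
    ∀ t : Fin T,
      |((keptSet αtilde s Samp t).card : ℤ) - ((keptSet αtilde s' Samp t).card : ℤ)| ≤ 2 := by
  intro t
  have hne : ∀ i, i ≠ tstar → s' i = s i := by
    intro i hi; rw [hs', Function.update_of_ne hi]
  have hst : s' tstar = none := by rw [hs', Function.update_self]
  have hsub : ∀ j w, laterSet s' t j w ⊆ laterSet s t j w := by
    intro j w i hi
    rw [mem_laterSet] at hi ⊢
    obtain ⟨h1, h2, f, hf, hw⟩ := hi
    refine ⟨h1, h2, f, ?_, hw⟩
    rw [← hne i (by rintro rfl; simp [hst] at hf)]; exact hf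
  have hsup : ∀ j w, laterSet s t j w ⊆ insert tstar (laterSet s' t j w) := by
    intro j w i hi
    rw [Finset.mem_insert]
    by_cases h : i = tstar
    · exact Or.inl h
    · right
      rw [mem_laterSet] at hi ⊢
      rwa [hne i h]
  have hA : keptSet αtilde s Samp t ⊆ insert tstar (keptSet αtilde s' Samp t) := by
    intro j hj
    rw [Finset.mem_insert]
    by_cases h : j = tstar
    · exact Or.inl h
    · right
      rw [mem_keptSet] at hj ⊢
      obtain ⟨h1, h2, e, he, hw⟩ := hj
      exact ⟨h1, h2, e, by rw [hne j h, he],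
        fun w hwe => (Finset.card_le_card (hsub j w)).trans (hw w hwe)⟩
  have hB : ∃ u v : V, ∀ w ∈ estar, w = u ∨ w = v := by
    induction estar using Sym2.ind with
    | _ u v => exact ⟨u, v, fun w hw => Sym2.mem_iff.1 hw⟩
  obtain ⟨u, v, huv⟩ := hB
  have hC : keptSet αtilde s' Samp t ⊆
      keptSet αtilde s Samp t ∪ (critSet αtilde s t u ∪ critSet αtilde s t v) := by
    intro j hj
    rw [Finset.mem_union]
    by_cases hk : j ∈ keptSet αtilde s Samp t
    · exact Or.inl hk
    right
    rw [mem_keptSet] at hj hk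
    obtain ⟨h1, h2, e, he, hw⟩ := hj
    have hjs : s j = some e := by
      rw [← hne j (by rintro rfl; simp [hst] at he)]; exact he
    have : ∃ w ∈ e, αtilde < (laterSet s t j w).card := by
      by_contra hcon
      push Not at hcon
      exact hk ⟨h1, h2, e, hjs, hcon⟩
    obtain ⟨w, hwe, hlt⟩ := this
    have hle := hw w hwe
    have hup := (Finset.card_le_card (hsup j w)).trans (Finset.card_insert_le _ _)
    have hmem : tstar ∈ laterSet s t j w := by
      by_contra hn
      have : laterSet s t j w ⊆ laterSet s' t j w := by
        intro i hi
        rcases Finset.mem_insert.1 (hsup j w hi) with h | h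
        · exact absurd (h ▸ hi) hn
        · exact h
      have := Finset.card_le_card this
      omega
    rw [mem_laterSet] at hmem
    obtain ⟨_, _, f, hf, hwf⟩ := hmem
    have hfe : estar = f := by rw [hstar] at hf; exact Option.some.inj hf
    have hcrit : j ∈ critSet αtilde s t w := by
      simp only [critSet, Finset.mem_filter, Finset.mem_univ, true_and]
      exact ⟨h2, ⟨e, hjs, hwe⟩, by omega⟩
    rw [Finset.mem_union]
    rcases huv w (hfe ▸ hwf) with h | h
    · left; exact h ▸ hcrit
    · right; exact h ▸ hcrit
  have h1 := (Finset.card_le_card hA).trans (Finset.card_insert_le _ _)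
  have h2 := (Finset.card_le_card hC).trans (Finset.card_union_le _ _)
  have h3 := Finset.card_union_le (critSet αtilde s t u) (critSet αtilde s t v)
  have h4 := critSet_card αtilde s t u
  have h5 := critSet_card αtilde s t v
  rw [abs_le]
  constructor <;> omega
end

section
/- Let η > 0, let α ≥ 1, and let G be a finite simple graph with the property that every vertex subset S induces at most α·|S| edges (which holds in particular whenever G has arboricity at most α). Set Λ = (1 + 1/η) · 2α and let V_> = {v ∈ V(G) : deg_G(v) > Λ}. Then for every vertex cover C of G, the set U_> = V_> \ C satisfies |U_>| ≤ η · |C|. -/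
attribute [local instance] Classical.propDecidable

/-- If every vertex subset `S` of `G` induces at most `α·|S|` edges (as is the case when `G`
has arboricity at most `α`), `Λ = (1 + 1/η)·2α`, and `C` is any vertex cover of `G`, then the
set `U_> = V_> \ C` of high-degree vertices outside `C` satisfies `|U_>| ≤ η·|C|`. -/
theorem high_degree_outside_cover {V : Type*} [Fintype V] [DecidableEq V]
    (G : SimpleGraph V) [DecidableRel G.Adj] (η α : ℝ) (hη : 0 < η) (hα : 1 ≤ α)
    (harb : ∀ S : Finset V,
      ((G.edgeFinset.filter fun e => ∀ v ∈ e, v ∈ S).card : ℝ) ≤ α * S.card)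
    (C : Finset V) (hC : ∀ e ∈ G.edgeFinset, ∃ v ∈ C, v ∈ e) :
    (((Finset.univ.filter fun v : V =>
        (1 + 1 / η) * (2 * α) < (G.degree v : ℝ)) \ C).card : ℝ) ≤ η * C.card := by
  set U := (Finset.univ.filter fun v : V =>
        (1 + 1 / η) * (2 * α) < (G.degree v : ℝ)) \ C with hU
  have hUdeg : ∀ u ∈ U, (1 + 1 / η) * (2 * α) ≤ (G.degree u : ℝ) := by
    intro u hu
    simp only [hU, Finset.mem_sdiff, Finset.mem_filter] at hu
    exact hu.1.2.le
  have hUC : ∀ u ∈ U, u ∉ C := by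
    intro u hu
    exact (Finset.mem_sdiff.1 hu).2
  clear_value U
  have hadj : ∀ u ∈ U, ∀ w, G.Adj u w → w ∈ C := by
    intro u hu w h
    obtain ⟨v, hv, hve⟩ := hC s(u, w) (by simpa using h)
    rcases Sym2.mem_iff.1 hve with rfl | rfl
    · exact absurd hv (hUC _ hu)
    · exact hv
  have hinc : ∀ u ∈ U, ∀ e ∈ G.incidenceFinset u, ∃ w ∈ C, e = s(u, w) ∧ G.Adj u w := by
    intro u hu e he
    rw [SimpleGraph.mem_incidenceFinset] at he
    obtain ⟨h1, h2⟩ := he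
    obtain ⟨w, rfl⟩ := h2
    have h1' : G.Adj u w := h1
    exact ⟨w, hadj u hu w h1', rfl, h1'⟩
  have hdisj : ∀ u ∈ U, ∀ v ∈ U, u ≠ v →
      Disjoint (G.incidenceFinset u) (G.incidenceFinset v) := by
    intro u hu v hv huv
    rw [Finset.disjoint_left]
    intro e h1 h2
    obtain ⟨w, hw, rfl, -⟩ := hinc u hu e h1
    obtain ⟨x, hx, he, -⟩ := hinc v hv _ h2
    rcases Sym2.eq_iff.1 he with ⟨h, -⟩ | ⟨h, -⟩
    · exact huv h
    · exact hUC u hu (h ▸ hx)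
  have hsum : ∑ u ∈ U, G.degree u ≤
      (G.edgeFinset.filter fun e => ∀ v ∈ e, v ∈ U ∪ C).card := by
    have h1 : (U.biUnion fun u => G.incidenceFinset u).card = ∑ u ∈ U, G.degree u := by
      rw [Finset.card_biUnion hdisj]
      simp
    rw [← h1]
    apply Finset.card_le_card
    intro e he
    obtain ⟨u, hu, he⟩ := Finset.mem_biUnion.1 he
    obtain ⟨w, hw, rfl, h⟩ := hinc u hu e he
    rw [Finset.mem_filter]
    refine ⟨by simpa using h, ?_⟩
    intro v hv
    rcases Sym2.mem_iff.1 hv with rfl | rfl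
    · exact Finset.mem_union_left _ hu
    · exact Finset.mem_union_right _ hw
  have h2 : (U.card : ℝ) * ((1 + 1 / η) * (2 * α)) ≤ ∑ u ∈ U, (G.degree u : ℝ) := by
    rw [← nsmul_eq_mul]
    exact Finset.card_nsmul_le_sum _ _ _ hUdeg
  have h3 : (∑ u ∈ U, (G.degree u : ℝ)) ≤ α * ((U ∪ C).card : ℝ) :=
    le_trans (by exact_mod_cast hsum) (harb (U ∪ C))
  have h4 : ((U ∪ C).card : ℝ) ≤ U.card + C.card := by
    exact_mod_cast Finset.card_union_le U C
  have hα0 : 0 < α := by linarith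
  have h5 : α * ((U.card : ℝ) * (2 * (1 + 1 / η))) ≤ α * (U.card + C.card) := by
    have := mul_le_mul_of_nonneg_left h4 hα0.le
    linarith
  have h6 := le_of_mul_le_mul_left h5 hα0
  have h7 := mul_le_mul_of_nonneg_left h6 hη.le
  have h8 : η * ((U.card : ℝ) * (2 * (1 + 1 / η))) = U.card * (2 * η + 2) := by
    field_simp
  have h9 : (0 : ℝ) ≤ η * U.card := by positivity
  have h10 : (0 : ℝ) ≤ U.card := by positivity
  nlinarith
end

section
/- Let η > 0, let α ≥ 1, and let G be a finite simple graph with the property that every vertex subset S induces at most α·|S| edges (which holds in particular whenever G has arboricity at most α). Set Λ = (1 + 1/η) · 2α and let V_>^Λ = {v ∈ V(G) : deg_G(v) > Λ}. Let H be any spanning subgraph of G that contains every edge of G both of whose endpoints have degree at most Λ in G. Suppose C is a vertex cover of H satisfying |C| ≤ β · τ(H) + ζ, where τ(H) denotes the minimum size of a vertex cover of H and β, ζ ≥ 0. Then C ∪ V_>^Λ is a vertex cover of G of cardinality at most (1 + β + η) · τ(G) + ζ. -/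
attribute [local instance] Classical.propDecidable

/-- The minimum size of a vertex cover of `G`. -/
noncomputable def vertexCoverNumber {V : Type*} [Fintype V] (G : SimpleGraph V) : ℕ :=
  sInf {n | ∃ C : Finset V, (∀ e ∈ G.edgeSet, ∃ v ∈ C, v ∈ e) ∧ C.card = n}

theorem vcn_spec {V : Type*} [Fintype V] (G : SimpleGraph V) :
    ∃ C : Finset V, (∀ e ∈ G.edgeSet, ∃ v ∈ C, v ∈ e) ∧ C.card = vertexCoverNumber G := by
  have h : {n | ∃ C : Finset V, (∀ e ∈ G.edgeSet, ∃ v ∈ C, v ∈ e) ∧ C.card = n}.Nonempty := by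
    refine ⟨_, Finset.univ, ?_, rfl⟩
    intro e _
    induction e with
    | _ a b => exact ⟨a, Finset.mem_univ _, by simp⟩
  exact Nat.sInf_mem h

theorem vcn_le {V : Type*} [Fintype V] (G : SimpleGraph V) (C : Finset V)
    (hC : ∀ e ∈ G.edgeSet, ∃ v ∈ C, v ∈ e) : vertexCoverNumber G ≤ C.card :=
  Nat.sInf_le ⟨C, hC, rfl⟩

theorem sum_deg_le {V : Type*} [Fintype V] [DecidableEq V]
    (G : SimpleGraph V) [DecidableRel G.Adj] (M W : Finset V)
    (hM : ∀ e ∈ G.edgeSet, ∃ v ∈ M, v ∈ e) (hW : Disjoint W M) :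
    ∑ v ∈ W, G.degree v ≤ (G.edgeFinset.filter fun e => ∀ v ∈ e, v ∈ W ∪ M).card := by
  have hd : ∀ v, v ∈ W → v ∉ M := fun v h h' => Finset.disjoint_left.mp hW h h'
  have key : ∀ a b, G.Adj a b → a ∈ M ∨ b ∈ M := by
    intro a b h
    obtain ⟨v, hv, hve⟩ := hM s(a, b) h
    rcases Sym2.mem_iff.mp hve with rfl | rfl
    · exact Or.inl hv
    · exact Or.inr hv
  have h1 : (W.biUnion fun v => G.incidenceFinset v).card = ∑ v ∈ W, G.degree v := by
    rw [Finset.card_biUnion]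
    · exact Finset.sum_congr rfl fun v _ => G.card_incidenceFinset_eq_degree v
    · intro a ha b hb hab
      refine Finset.disjoint_left.mpr ?_
      intro e h1 h2
      rw [SimpleGraph.mem_incidenceFinset] at h1 h2
      have he : e = s(a, b) := ((Sym2.mem_and_mem_iff hab).mp ⟨h1.2, h2.2⟩)
      have := h1.1
      rw [he] at this
      rcases key a b this with h | h
      · exact hd _ ha h
      · exact hd _ hb h
  rw [← h1]
  apply Finset.card_le_card
  intro e he
  rw [Finset.mem_biUnion] at he
  obtain ⟨a, ha, h⟩ := he
  rw [SimpleGraph.mem_incidenceFinset] at h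
  obtain ⟨h, hae⟩ := h
  obtain ⟨b, rfl⟩ := Sym2.mem_iff_exists.mp hae
  rw [Finset.mem_filter]
  refine ⟨by simpa using h, ?_⟩
  intro v hv
  have hb : b ∈ M := (key a b h).resolve_left (hd a ha)
  rcases Sym2.mem_iff.mp hv with rfl | rfl
  · exact Finset.mem_union_left _ ha
  · exact Finset.mem_union_right _ hb

/-- Suppose every vertex subset `S` of `G` induces at most `α·|S|` edges (as is the case when
`G` has arboricity at most `α`), `Λ = (1 + 1/η)·2α`, and `H ≤ G` is a spanning subgraph
containing every edge of `G` both of whose endpoints have degree at most `Λ` in `G`. If `C` is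
a vertex cover of `H` with `|C| ≤ β·τ(H) + ζ`, then `C ∪ V_>^Λ` is a vertex cover of `G` with
`|C ∪ V_>^Λ| ≤ (1 + β + η)·τ(G) + ζ`. -/
theorem vertex_cover_sparsifier {V : Type*} [Fintype V] [DecidableEq V]
    (G H : SimpleGraph V) [DecidableRel G.Adj]
    (η α β ζ : ℝ) (hη : 0 < η) (hα : 1 ≤ α) (hβ : 0 ≤ β) (hζ : 0 ≤ ζ)
    (harb : ∀ S : Finset V,
      ((G.edgeFinset.filter fun e => ∀ v ∈ e, v ∈ S).card : ℝ) ≤ α * S.card)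
    (hHG : H ≤ G)
    (hH : ∀ e ∈ G.edgeSet,
      (∀ v ∈ e, (G.degree v : ℝ) ≤ (1 + 1 / η) * (2 * α)) → e ∈ H.edgeSet)
    (C : Finset V) (hC : ∀ e ∈ H.edgeSet, ∃ v ∈ C, v ∈ e)
    (hCsize : (C.card : ℝ) ≤ β * vertexCoverNumber H + ζ) :
    (∀ e ∈ G.edgeSet, ∃ v ∈ C ∪ (Finset.univ.filter fun v : V =>
        (1 + 1 / η) * (2 * α) < (G.degree v : ℝ)), v ∈ e) ∧
      (((C ∪ (Finset.univ.filter fun v : V =>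
          (1 + 1 / η) * (2 * α) < (G.degree v : ℝ))).card : ℝ) ≤
        (1 + β + η) * vertexCoverNumber G + ζ) := by
  constructor
  · intro e he
    by_cases h : ∀ v ∈ e, (G.degree v : ℝ) ≤ (1 + 1 / η) * (2 * α)
    · obtain ⟨v, hv, hve⟩ := hC e (hH e he h)
      exact ⟨v, Finset.mem_union_left _ hv, hve⟩
    · push Not at h
      obtain ⟨v, hve, hv⟩ := h
      exact ⟨v, Finset.mem_union_right _ (by simpa using hv), hve⟩
  · obtain ⟨M, hM, hMc⟩ := vcn_spec G
    have hHle : vertexCoverNumber H ≤ M.card :=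
      vcn_le H M fun e he => hM e (SimpleGraph.edgeSet_mono hHG he)
    rw [← hMc]
    set B := Finset.univ.filter fun v : V => (1 + 1 / η) * (2 * α) < (G.degree v : ℝ) with hB
    have hdis : Disjoint (B \ M) M := Finset.sdiff_disjoint
    have h1 := sum_deg_le G M (B \ M) hM hdis
    have h2 : ((∑ v ∈ B \ M, G.degree v : ℕ) : ℝ) ≤ α * ((B \ M) ∪ M).card := by
      refine le_trans (Nat.cast_le.mpr h1) ?_
      convert harb ((B \ M) ∪ M)
    have h3 : ((B \ M).card : ℝ) * ((1 + 1 / η) * (2 * α)) ≤ ((∑ v ∈ B \ M, G.degree v : ℕ) : ℝ) := by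
      push_cast
      rw [← nsmul_eq_mul]
      apply Finset.card_nsmul_le_sum
      intro v hv
      have := (Finset.mem_sdiff.mp hv).1
      rw [hB, Finset.mem_filter] at this
      exact this.2.le
    rw [Finset.card_union_of_disjoint hdis] at h2
    push_cast at h2 h3
    have h4 : (B.card : ℝ) ≤ (B \ M).card + M.card := by
      have := Finset.card_le_card_sdiff_add_card (s := B) (t := M)
      exact_mod_cast this
    have h5 : ((C ∪ B).card : ℝ) ≤ C.card + B.card := by
      exact_mod_cast Finset.card_union_le C B
    have h6 : β * (vertexCoverNumber H : ℝ) ≤ β * M.card :=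
      mul_le_mul_of_nonneg_left (by exact_mod_cast hHle) hβ
    have hw : (0 : ℝ) ≤ ((B \ M).card : ℝ) := by positivity
    generalize ((B \ M).card : ℝ) = w at *
    have h7 : w * ((1 + 1 / η) * 2) ≤ w + M.card := by
      have : α * (w * ((1 + 1 / η) * 2)) ≤ α * (w + M.card) := by linarith
      exact le_of_mul_le_mul_left this (by linarith)
    have h8 : w ≤ η * M.card := by
      have h9 : w * (1 / η) ≤ M.card := by
        have : 0 ≤ w * (1 / η) := by positivity
        linarith
      rw [mul_one_div, div_le_iff₀ hη] at h9
      linarith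
    linarith
end

section
/- Let n be a natural number and let Y, Q ⊆ {1, …, n}. Consider the simple graph on the 3n vertices {u_i, v_i, w_i : i ∈ {1, …, n}} whose edges are exactly: {u_i, v_i} for each i ∈ Y, and {v_i, w_i} for each i ∈ Q. Then the matching number of this graph equals |Y ∪ Q|. -/
attribute [local instance] Classical.propDecidable

/-- The graph on vertices `{u_i, v_i, w_i : i ∈ [n]}` (encoded as `Fin n ⊕ Fin n ⊕ Fin n`,
with `u_i = inl i`, `v_i = inr (inl i)`, `w_i = inr (inr i)`) whose edges are `{u_i, v_i}` for
`i ∈ Y` and `{v_i, w_i}` for `i ∈ Q`. -/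
noncomputable def matchingEncodingGraph (n : ℕ) (Y Q : Finset (Fin n)) :
    SimpleGraph (Fin n ⊕ Fin n ⊕ Fin n) :=
  SimpleGraph.fromEdgeSet
    ({e | ∃ i ∈ Y, e = s(Sum.inl i, Sum.inr (Sum.inl i))} ∪
      {e | ∃ i ∈ Q, e = s(Sum.inr (Sum.inl i), Sum.inr (Sum.inr i))})

/-- The matching number of the inner-product encoding graph equals `|Y ∪ Q|`. -/
theorem matchingEncodingGraph_matchingNumber (n : ℕ) (Y Q : Finset (Fin n)) :
    (matchingEncodingGraph n Y Q).matchingNumber = (Y ∪ Q).card := by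
  unfold SimpleGraph.matchingNumber
  have hes : ∀ e, e ∈ (matchingEncodingGraph n Y Q).edgeSet ↔
      ((∃ i ∈ Y, e = s(Sum.inl i, Sum.inr (Sum.inl i))) ∨
        (∃ i ∈ Q, e = s(Sum.inr (Sum.inl i), Sum.inr (Sum.inr i)))) := by
    intro e
    unfold matchingEncodingGraph
    rw [SimpleGraph.edgeSet_fromEdgeSet]
    constructor
    · rintro ⟨h, -⟩
      exact h
    · intro h
      refine ⟨h, ?_⟩
      rcases h with ⟨i, -, rfl⟩ | ⟨i, -, rfl⟩ <;> simp
  apply IsGreatest.csSup_eq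
  constructor
  · let g : Fin n → Sym2 (Fin n ⊕ Fin n ⊕ Fin n) := fun i =>
      if i ∈ Y then s(Sum.inl i, Sum.inr (Sum.inl i))
      else s(Sum.inr (Sum.inl i), Sum.inr (Sum.inr i))
    have key : ∀ i j v, v ∈ g i → v ∈ g j → i = j := by
      intro i j v hi hj
      simp only [g] at hi hj
      split_ifs at hi hj <;> simp only [Sym2.mem_iff] at hi hj <;>
        rcases hi with rfl | rfl <;> simpa using hj
    have gv : ∀ i, Sum.inr (Sum.inl i) ∈ g i := by
      intro i
      simp only [g]
      split_ifs <;> simp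
    refine ⟨(Y ∪ Q).image g, ⟨?_, ?_⟩, ?_⟩
    · intro e he
      rw [Finset.mem_coe, Finset.mem_image] at he
      obtain ⟨i, hi, rfl⟩ := he
      rw [hes]
      by_cases h : i ∈ Y
      · exact Or.inl ⟨i, h, by simp [g, h]⟩
      · refine Or.inr ⟨i, ?_, by simp [g, h]⟩
        exact (Finset.mem_union.mp hi).resolve_left h
    · intro e he f hf hne v hv hv2
      rw [Finset.mem_coe, Finset.mem_image] at he hf
      obtain ⟨i, hi, rfl⟩ := he
      obtain ⟨j, hj, rfl⟩ := hf
      exact hne (congrArg g (key i j v hv hv2))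
    · apply Finset.card_image_of_injective
      intro i j hij
      exact key i j _ (gv i) (hij ▸ gv i)
  · rintro m ⟨M, ⟨hM, hp⟩, rfl⟩
    have hc : ∀ e ∈ M, ∃ i ∈ Y ∪ Q, Sum.inr (Sum.inl i) ∈ e := by
      intro e he
      rcases (hes e).mp (hM he) with ⟨i, hi, rfl⟩ | ⟨i, hi, rfl⟩
      · exact ⟨i, Finset.mem_union_left _ hi, by simp⟩
      · exact ⟨i, Finset.mem_union_right _ hi, by simp⟩
    rcases M.eq_empty_or_nonempty with hn | ⟨e0, he0⟩
    · simp [hn]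
    have : Nonempty (Fin n) := ⟨(hc e0 he0).choose⟩
    choose! c hc1 hc2 using hc
    apply Finset.card_le_card_of_injOn c hc1
    intro e he f hf hef
    by_contra hne
    refine hp he hf hne _ (hc2 e he) ?_
    rw [hef]
    exact hc2 f hf
end

section
/- Let n be a natural number and let Y, Q ⊆ {1, …, n}. Consider the simple graph on the 4n vertices {u_i, v_i, a_i, b_i : i ∈ {1, …, n}} whose edges are exactly: {u_i, a_i} and {v_i, b_i} for every i ∈ {1, …, n}, {a_i, b_i} for each i ∈ Y, and {u_i, v_i} for each i ∈ Q. Then the number of connected components of this graph equals 2n − |Y ∪ Q|. -/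
/-- The graph on vertices `{u_i, v_i, a_i, b_i : i ∈ [n]}` (encoded as `Fin n × Fin 4`, with
`u_i = (i, 0)`, `v_i = (i, 1)`, `a_i = (i, 2)`, `b_i = (i, 3)`) whose edges are `{u_i, a_i}`
and `{v_i, b_i}` for every `i`, `{a_i, b_i}` for `i ∈ Y`, and `{u_i, v_i}` for `i ∈ Q`. -/
noncomputable def ccEncodingGraph (n : ℕ) (Y Q : Finset (Fin n)) :
    SimpleGraph (Fin n × Fin 4) :=
  SimpleGraph.fromEdgeSet
    ({e | ∃ i : Fin n, e = s(((i, 0) : Fin n × Fin 4), (i, 2))} ∪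
      {e | ∃ i : Fin n, e = s(((i, 1) : Fin n × Fin 4), (i, 3))} ∪
      {e | ∃ i ∈ Y, e = s(((i, 2) : Fin n × Fin 4), (i, 3))} ∪
      {e | ∃ i ∈ Q, e = s(((i, 0) : Fin n × Fin 4), (i, 1))})

/-- Label of the component of a vertex. -/
noncomputable def ccLabel (n : ℕ) (Z : Finset (Fin n)) (x : Fin n × Fin 4) :
    Fin n ⊕ {i : Fin n // i ∉ Z} :=
  if h : x.1 ∉ Z ∧ (x.2 = 1 ∨ x.2 = 3) then Sum.inr ⟨x.1, h.1⟩ else Sum.inl x.1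

theorem ccLabel_adj (n : ℕ) (Y Q : Finset (Fin n)) (x y : Fin n × Fin 4)
    (h : (ccEncodingGraph n Y Q).Adj x y) : ccLabel n (Y ∪ Q) x = ccLabel n (Y ∪ Q) y := by
  obtain ⟨i, k⟩ := x
  obtain ⟨j, l⟩ := y
  simp only [ccEncodingGraph, SimpleGraph.fromEdgeSet_adj, Set.mem_union, Set.mem_setOf_eq,
    Sym2.eq_iff, Prod.mk.injEq] at h
  obtain ⟨((⟨m, h⟩ | ⟨m, h⟩) | ⟨m, hm, h⟩) | ⟨m, hm, h⟩, -⟩ := h <;>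
  obtain ⟨⟨rfl, rfl⟩, ⟨rfl, rfl⟩⟩ | ⟨⟨rfl, rfl⟩, ⟨rfl, rfl⟩⟩ := h <;>
  simp [ccLabel, *]

theorem ccReach_base (n : ℕ) (Y Q : Finset (Fin n)) (i : Fin n) :
    (ccEncodingGraph n Y Q).Reachable (i, 0) (i, 2) ∧
    (ccEncodingGraph n Y Q).Reachable (i, 1) (i, 3) ∧
    (i ∈ Y ∪ Q → (ccEncodingGraph n Y Q).Reachable (i, 0) (i, 1)) := by
  have h1 : (ccEncodingGraph n Y Q).Reachable (i, 0) (i, 2) :=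
    SimpleGraph.Adj.reachable (by simp [ccEncodingGraph])
  have h2 : (ccEncodingGraph n Y Q).Reachable (i, 1) (i, 3) :=
    SimpleGraph.Adj.reachable (by simp [ccEncodingGraph])
  refine ⟨h1, h2, fun h => ?_⟩
  rcases Finset.mem_union.1 h with h | h
  · have h3 : (ccEncodingGraph n Y Q).Reachable (i, 2) (i, 3) :=
      SimpleGraph.Adj.reachable (by simp [ccEncodingGraph, h])
    exact h1.trans (h3.trans h2.symm)
  · exact SimpleGraph.Adj.reachable (by simp [ccEncodingGraph, h])

/-- Canonical representative of a label. -/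
def ccRep (n : ℕ) (Z : Finset (Fin n)) : Fin n ⊕ {i : Fin n // i ∉ Z} → Fin n × Fin 4
  | Sum.inl i => (i, 0)
  | Sum.inr i => (i.1, 1)

theorem ccReach_rep (n : ℕ) (Y Q : Finset (Fin n)) (x : Fin n × Fin 4) :
    (ccEncodingGraph n Y Q).Reachable (ccRep n (Y ∪ Q) (ccLabel n (Y ∪ Q) x)) x := by
  obtain ⟨i, k⟩ := x
  obtain ⟨h1, h2, h3⟩ := ccReach_base n Y Q i
  by_cases h : i ∈ Y ∪ Q
  · have h3 := h3 h
    have e : ccLabel n (Y ∪ Q) (i, k) = Sum.inl i := dif_neg (fun h' => h'.1 h)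
    rw [e]
    fin_cases k
    · exact SimpleGraph.Reachable.refl _
    · exact h3
    · exact h1
    · exact h3.trans h2
  · fin_cases k
    · rw [ccLabel, dif_neg (by simp)]; exact SimpleGraph.Reachable.refl _
    · rw [ccLabel, dif_pos ⟨h, by simp⟩]; exact SimpleGraph.Reachable.refl _
    · rw [ccLabel, dif_neg (by simp)]; exact h1
    · rw [ccLabel, dif_pos ⟨h, by simp⟩]; exact h2

theorem ccLabel_reach (n : ℕ) (Y Q : Finset (Fin n)) (x y : Fin n × Fin 4)
    (h : (ccEncodingGraph n Y Q).Reachable x y) :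
    ccLabel n (Y ∪ Q) x = ccLabel n (Y ∪ Q) y := by
  obtain ⟨p⟩ := h
  induction p with
  | nil => rfl
  | cons h _ ih => exact (ccLabel_adj n Y Q _ _ h).trans ih

theorem ccLabel_rep (n : ℕ) (Z : Finset (Fin n)) (z : Fin n ⊕ {i : Fin n // i ∉ Z}) :
    ccLabel n Z (ccRep n Z z) = z := by
  rcases z with i | ⟨i, hi⟩
  · simp [ccLabel, ccRep]
  · simp [ccLabel, ccRep, hi]

/-- The number of connected components of the inner-product encoding graph equals
`2n − |Y ∪ Q|`. -/
theorem ccEncodingGraph_card_connectedComponent (n : ℕ) (Y Q : Finset (Fin n)) :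
    Nat.card (ccEncodingGraph n Y Q).ConnectedComponent = 2 * n - (Y ∪ Q).card := by
  have e : (ccEncodingGraph n Y Q).ConnectedComponent ≃ Fin n ⊕ {i : Fin n // i ∉ Y ∪ Q} :=
    { toFun := Quot.lift (ccLabel n (Y ∪ Q)) (ccLabel_reach n Y Q)
      invFun := fun z => (ccEncodingGraph n Y Q).connectedComponentMk (ccRep n (Y ∪ Q) z)
      left_inv := by
        intro c
        induction c using SimpleGraph.ConnectedComponent.ind with
        | h v => exact SimpleGraph.ConnectedComponent.sound (ccReach_rep n Y Q v)
      right_inv := fun z => ccLabel_rep n (Y ∪ Q) z }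
  have hc : Fintype.card {i : Fin n // i ∉ Y ∪ Q} = n - (Y ∪ Q).card := by
    rw [Fintype.card_subtype_compl, Fintype.card_fin, Fintype.card_coe]
  have hle : (Y ∪ Q).card ≤ n := by simpa using Finset.card_le_univ (Y ∪ Q)
  rw [Nat.card_congr e, Nat.card_eq_fintype_card, Fintype.card_sum, Fintype.card_fin, hc]
  omega
end
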